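/- Let U : [0,1]² → [0,1] be a disjunctive uninorm with neutral element e ∈ (0,1) and let x ∈ (0,1), x < e, be such that s ↦ U(x, s) is continuous with range [0,1]; let y > e satisfy U(x, y) = e. Define x_U^(0) = e, x_U^(n) = U(x, x_U^(n−1)) and x_U^(−n) = U(y, x_U^(−n+1)) for n ≥ 1, a_x = lim_{n→∞} x_U^(n) and d_x = lim_{n→∞} x_U^(−n). If U(x, t) = t for all t ∈ [0, a_x] ∪ [d_x, 1], then: (i) U(s, t) = t for all s ∈ (a_x, d_x) and all t ∈ [0, a_x] ∪ [d_x, 1]; (ii) U(s, t) ∈ [0, a_x] ∪ [d_x, 1] for all s, t ∈ [0, a_x] ∪ [d_x, 1]; (iii) U(s, t) ∈ (a_x, d_x) for all s, t ∈ (a_x, d_x); i.e., U is an ordinal sum of a semigroup on (a_x, d_x) and a semigroup on [0, a_x] ∪ [d_x, 1]. -/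

import Mathlib

/-- A uninorm on `[0,1]` with neutral element `e`: commutative, associative,
increasing in each variable, `U x e = x`, mapping `[0,1]²` into `[0,1]`. -/
def IsUninorm (U : ℝ → ℝ → ℝ) (e : ℝ) : Prop :=
  e ∈ Set.Icc (0:ℝ) 1 ∧
  (∀ x ∈ Set.Icc (0:ℝ) 1, ∀ y ∈ Set.Icc (0:ℝ) 1, U x y ∈ Set.Icc (0:ℝ) 1) ∧
  (∀ x ∈ Set.Icc (0:ℝ) 1, ∀ y ∈ Set.Icc (0:ℝ) 1, U x y = U y x) ∧
  (∀ x ∈ Set.Icc (0:ℝ) 1, ∀ y ∈ Set.Icc (0:ℝ) 1, ∀ z ∈ Set.Icc (0:ℝ) 1,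
    U (U x y) z = U x (U y z)) ∧
  (∀ x ∈ Set.Icc (0:ℝ) 1, ∀ y ∈ Set.Icc (0:ℝ) 1, ∀ z ∈ Set.Icc (0:ℝ) 1,
    y ≤ z → U x y ≤ U x z) ∧
  (∀ x ∈ Set.Icc (0:ℝ) 1, ∀ y ∈ Set.Icc (0:ℝ) 1, ∀ z ∈ Set.Icc (0:ℝ) 1,
    x ≤ y → U x z ≤ U y z) ∧
  (∀ x ∈ Set.Icc (0:ℝ) 1, U x e = x)

/-- A fuzzy negation on `[0,1]`: `N 0 = 1`, `N 1 = 0`, decreasing,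
mapping `[0,1]` into `[0,1]`. -/
def IsFuzzyNegation (N : ℝ → ℝ) : Prop :=
  (∀ x ∈ Set.Icc (0:ℝ) 1, N x ∈ Set.Icc (0:ℝ) 1) ∧
  N 0 = 1 ∧ N 1 = 0 ∧
  (∀ x ∈ Set.Icc (0:ℝ) 1, ∀ y ∈ Set.Icc (0:ℝ) 1, x ≤ y → N y ≤ N x)

/-!
Read a uninorm as an ordered monoid structure on `[0,1]` with identity `e`. The point `x` is then a
unit `u ≠ 1` with inverse `y`, and `x_U^(n) = u ^ n`. The elements lying between some `u ^ n` and
`u⁻¹ ^ n` form a submonoid `H`. If `u * t = t`, multiplying `u ^ n ≤ s ≤ u⁻¹ ^ n` by `t` squeezes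
`s * t` to `t`. No element of `H` is fixed by `u`: if `u ^ n ≤ w ≤ u⁻¹ ^ n` and `u * w = w`, then
`w = u ^ n * w ≤ 1` and `w = u⁻¹ ^ n * w ≥ 1`, so `w = 1` and hence `u = 1`. Since `u` fixes
everything outside `(a_x, d_x)`, this forces `H = (a_x, d_x)`.
-/

section OrderedMonoid

variable {M : Type*} [Monoid M]

theorem pow_mul_eq_of_mul_eq {x t : M} (h : x * t = t) (n : ℕ) : x ^ n * t = t :=
  (MulAction.stabilizerSubmonoid M t).pow_mem h n

theorem units_inv_mul_eq_of_mul_eq {u : Mˣ} {t : M} (h : u * t = t) : ↑u⁻¹ * t = t :=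
  u.inv_mul_eq_iff_eq_mul.2 h.symm

/-- The submonoid of elements lying between `u ^ n` and `u⁻¹ ^ n` for some `n : ℕ`, that is, the
interval exhausted by the powers of `u` when `u ≤ 1`. -/
def powHull [Preorder M] [MulLeftMono M] [MulRightMono M] (u : Mˣ) : Submonoid M where
  carrier := {s | ∃ n : ℕ, (u : M) ^ n ≤ s ∧ s ≤ (↑u⁻¹ : M) ^ n}
  one_mem' := ⟨0, by simp⟩
  mul_mem' := by
    rintro s t ⟨m, hus, hsu⟩ ⟨n, hut, htu⟩
    refine ⟨m + n, ?_, ?_⟩ <;> rw [pow_add]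
    exacts [mul_le_mul' hus hut, mul_le_mul' hsu htu]

section PartialOrder

variable [PartialOrder M] [MulLeftMono M] [MulRightMono M] {u : Mˣ} {s t w : M}

theorem mul_eq_right_of_mem_powHull (hs : s ∈ powHull u) (ht : u * t = t) : s * t = t := by
  obtain ⟨n, hus, hsu⟩ := hs
  apply le_antisymm
  · calc s * t ≤ (↑u⁻¹ : M) ^ n * t := mul_le_mul_left hsu t
      _ = t := pow_mul_eq_of_mul_eq (units_inv_mul_eq_of_mul_eq ht) n
  · calc t = (u : M) ^ n * t := (pow_mul_eq_of_mul_eq ht n).symm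
      _ ≤ s * t := mul_le_mul_left hus t

theorem eq_one_of_mem_powHull (hw : w ∈ powHull u) (hfix : u * w = w) : w = 1 := by
  obtain ⟨n, huw, hwu⟩ := hw
  apply le_antisymm
  · calc w = (u : M) ^ n * w := (pow_mul_eq_of_mul_eq hfix n).symm
      _ ≤ (u : M) ^ n * (↑u⁻¹ : M) ^ n := mul_le_mul_right hwu _
      _ = 1 := pow_mul_pow_eq_one n u.mul_inv
  · calc 1 = (↑u⁻¹ : M) ^ n * (u : M) ^ n := (pow_mul_pow_eq_one n u.inv_mul).symm
      _ ≤ (↑u⁻¹ : M) ^ n * w := mul_le_mul_right huw _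
      _ = w := pow_mul_eq_of_mul_eq (units_inv_mul_eq_of_mul_eq hfix) n

theorem notMem_powHull_of_mul_eq (hu : u ≠ 1) (hfix : u * w = w) : w ∉ powHull u := by
  intro hw
  obtain rfl := eq_one_of_mem_powHull hw hfix
  exact hu (Units.ext (by simpa using hfix))

theorem coe_powHull_eq_of_subset {C : Set M} (hu : u ≠ 1) (hC : C ⊆ powHull u)
    (hfix : ∀ t ∉ C, u * t = t) : (powHull u : Set M) = C :=
  Set.Subset.antisymm
    (fun t ht => by_contra fun htC => notMem_powHull_of_mul_eq hu (hfix t htC) ht) hC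

end PartialOrder

theorem Ioo_subset_powHull [LinearOrder M] [MulLeftMono M] [MulRightMono M] [TopologicalSpace M]
    [OrderClosedTopology M] {u : Mˣ} {a d : M}
    (ha : Filter.Tendsto (fun n : ℕ => (u : M) ^ n) Filter.atTop (nhds a))
    (hd : Filter.Tendsto (fun n : ℕ => (↑u⁻¹ : M) ^ n) Filter.atTop (nhds d)) :
    Set.Ioo a d ⊆ powHull u := fun _ hs =>
  ((ha.eventually_lt_const hs.1).and (hd.eventually_const_lt hs.2)).exists.imp
    fun _ h => ⟨h.1.le, h.2.le⟩

theorem ordinalSum_Ioo_of_tendsto_pow [LinearOrder M] [MulLeftMono M] [MulRightMono M]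
    [TopologicalSpace M] [OrderClosedTopology M] {u : Mˣ} {a d : M} (hu : u ≠ 1)
    (ha : Filter.Tendsto (fun n : ℕ => (u : M) ^ n) Filter.atTop (nhds a))
    (hd : Filter.Tendsto (fun n : ℕ => (↑u⁻¹ : M) ^ n) Filter.atTop (nhds d))
    (hfix : ∀ t ∉ Set.Ioo a d, u * t = t) :
    (∀ s ∈ Set.Ioo a d, ∀ t ∉ Set.Ioo a d, s * t = t) ∧
    (∀ s ∉ Set.Ioo a d, ∀ t ∉ Set.Ioo a d, s * t ∉ Set.Ioo a d) ∧
    (∀ s ∈ Set.Ioo a d, ∀ t ∈ Set.Ioo a d, s * t ∈ Set.Ioo a d) := by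
  have hhull : (powHull u : Set M) = Set.Ioo a d :=
    coe_powHull_eq_of_subset hu (Ioo_subset_powHull ha hd) hfix
  simp only [← hhull, SetLike.mem_coe] at hfix ⊢
  exact ⟨fun s hs t ht => mul_eq_right_of_mem_powHull hs (hfix t ht),
    fun s hs t _ => notMem_powHull_of_mul_eq hu (by rw [← mul_assoc, hfix s hs]),
    fun s hs t ht => mul_mem hs ht⟩

end OrderedMonoid

theorem Icc_union_Icc_eq_Icc_diff_Ioo {α : Type*} [LinearOrder α] {a b c d : α} (hbd : b ≤ d)
    (hac : a ≤ c) : Set.Icc b a ∪ Set.Icc d c = Set.Icc b c \ Set.Ioo a d := by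
  grind

namespace IsUninorm

variable {U : ℝ → ℝ → ℝ} {e : ℝ}

/-- The unit interval as the ordered monoid with multiplication `U` and identity `e`. It is a type
synonym because `Set.Icc (0 : ℝ) 1` already carries the multiplication of `ℝ`. -/
def Carrier (_ : IsUninorm U e) : Type := Set.Icc (0 : ℝ) 1

variable (hU : IsUninorm U e)

noncomputable instance : LinearOrder hU.Carrier :=
  inferInstanceAs (LinearOrder (Set.Icc (0 : ℝ) 1))

instance : TopologicalSpace hU.Carrier := inferInstanceAs (TopologicalSpace (Set.Icc (0 : ℝ) 1))

instance : OrderClosedTopology hU.Carrier :=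
  inferInstanceAs (OrderClosedTopology (Set.Icc (0 : ℝ) 1))

instance : CommMonoid hU.Carrier where
  mul s t := ⟨U s.1 t.1, hU.2.1 _ s.2 _ t.2⟩
  one := ⟨e, hU.1⟩
  mul_comm s t := Subtype.ext (hU.2.2.1 _ s.2 _ t.2)
  mul_assoc r s t := Subtype.ext (hU.2.2.2.1 _ r.2 _ s.2 _ t.2)
  mul_one s := Subtype.ext (hU.2.2.2.2.2.2 _ s.2)
  one_mul s := Subtype.ext ((hU.2.2.1 _ hU.1 _ s.2).trans (hU.2.2.2.2.2.2 _ s.2))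

instance : MulLeftMono hU.Carrier where
  elim r s t hst := hU.2.2.2.2.1 _ r.2 _ s.2 _ t.2 hst

variable {hU}

theorem eq_val_pow {r : hU.Carrier} {z : ℕ → ℝ} (hzero : z 0 = e)
    (hsucc : ∀ n, z (n + 1) = U r.1 (z n)) (n : ℕ) : z n = (r ^ n).1 := by
  induction n with
  | zero => rw [hzero, pow_zero]; rfl
  | succ n ih => rw [hsucc, ih, pow_succ']; rfl

theorem exists_tendsto_pow {r : hU.Carrier} {z : ℕ → ℝ} {l : ℝ} (hzero : z 0 = e)
    (hsucc : ∀ n, z (n + 1) = U r.1 (z n)) (hz : Filter.Tendsto z Filter.atTop (nhds l)) :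
    ∃ l' : hU.Carrier, l'.1 = l ∧ Filter.Tendsto (fun n => r ^ n) Filter.atTop (nhds l') := by
  have hpow : z = fun n => (r ^ n).1 := funext (eq_val_pow hzero hsucc)
  have hl : l ∈ Set.Icc (0 : ℝ) 1 :=
    isClosed_Icc.mem_of_tendsto hz (.of_forall fun n => hpow ▸ (r ^ n).2)
  exact ⟨⟨l, hl⟩, rfl, tendsto_subtype_rng.2 (hpow ▸ hz)⟩

end IsUninorm

theorem stmt15_general {U : ℝ → ℝ → ℝ} {e : ℝ} (hU : IsUninorm U e)
    {x y : ℝ} (hx : x ∈ Set.Icc (0 : ℝ) 1) (hxe : x ≠ e) (hy : y ∈ Set.Icc (0 : ℝ) 1)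
    (hxy : U x y = e) {xs : ℤ → ℝ} (hxs0 : xs 0 = e)
    (hxsp : ∀ n : ℕ, xs ((n : ℤ) + 1) = U x (xs (n : ℤ)))
    (hxsn : ∀ n : ℕ, xs (-(n : ℤ) - 1) = U y (xs (-(n : ℤ)))) {ax dx : ℝ}
    (ha : Filter.Tendsto (fun n : ℕ => xs (n : ℤ)) Filter.atTop (nhds ax))
    (hd : Filter.Tendsto (fun n : ℕ => xs (-(n : ℤ))) Filter.atTop (nhds dx))
    (hfix : ∀ t ∈ Set.Icc (0 : ℝ) ax ∪ Set.Icc dx 1, U x t = t) :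
    (∀ s ∈ Set.Ioo ax dx, ∀ t ∈ Set.Icc (0 : ℝ) ax ∪ Set.Icc dx 1, U s t = t) ∧
    (∀ s ∈ Set.Icc (0 : ℝ) ax ∪ Set.Icc dx 1, ∀ t ∈ Set.Icc (0 : ℝ) ax ∪ Set.Icc dx 1,
      U s t ∈ Set.Icc (0 : ℝ) ax ∪ Set.Icc dx 1) ∧
    (∀ s ∈ Set.Ioo ax dx, ∀ t ∈ Set.Ioo ax dx, U s t ∈ Set.Ioo ax dx) := by
  let u : hU.Carrierˣ := Units.mkOfMulEqOne ⟨x, hx⟩ ⟨y, hy⟩ (Subtype.ext hxy)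
  have hu : u ≠ 1 := fun h => hxe (congrArg (fun v : hU.Carrierˣ => v.1.1) h)
  obtain ⟨a, rfl, ha_pow⟩ := IsUninorm.exists_tendsto_pow (r := u.1) hxs0 hxsp ha
  obtain ⟨d, rfl, hd_pow⟩ := IsUninorm.exists_tendsto_pow (r := u⁻¹.1) hxs0
    (fun n => by rw [Nat.cast_succ, neg_add', hxsn n]; rfl) hd
  rw [Icc_union_Icc_eq_Icc_diff_Ioo d.2.1 a.2.2] at hfix ⊢
  have hIoo {t : ℝ} (ht : t ∈ Set.Ioo a.1 d.1) : t ∈ Set.Icc (0 : ℝ) 1 :=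
    ⟨a.2.1.trans ht.1.le, ht.2.le.trans d.2.2⟩
  obtain ⟨hact, hcompl, hmid⟩ := ordinalSum_Ioo_of_tendsto_pow hu ha_pow hd_pow
    fun t ht => Subtype.ext (hfix t.1 ⟨t.2, ht⟩)
  exact ⟨fun s hs t ht => congrArg Subtype.val (hact ⟨s, hIoo hs⟩ hs ⟨t, ht.1⟩ ht.2),
    fun s hs t ht => ⟨hU.2.1 s hs.1 t ht.1, hcompl ⟨s, hs.1⟩ hs.2 ⟨t, ht.1⟩ ht.2⟩,
    fun s hs t ht => hmid ⟨s, hIoo hs⟩ hs ⟨t, hIoo ht⟩ ht⟩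

theorem stmt15 (U : ℝ → ℝ → ℝ) (e : ℝ) (he : e ∈ Set.Ioo (0:ℝ) 1)
    (hU : IsUninorm U e) (hdisj : U 1 0 = 1)
    (x : ℝ) (hx : x ∈ Set.Ioo (0:ℝ) 1) (hxe : x < e)
    (hcutc : ContinuousOn (fun s => U x s) (Set.Icc 0 1))
    (hcutr : (fun s => U x s) '' Set.Icc 0 1 = Set.Icc 0 1)
    (y : ℝ) (hy : y ∈ Set.Icc (0:ℝ) 1) (hye : e < y) (hxy : U x y = e)
    (xs : ℤ → ℝ) (hxs0 : xs 0 = e)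
    (hxsp : ∀ n : ℕ, xs ((n : ℤ) + 1) = U x (xs (n : ℤ)))
    (hxsn : ∀ n : ℕ, xs (-(n : ℤ) - 1) = U y (xs (-(n : ℤ))))
    (ax dx : ℝ)
    (ha : Filter.Tendsto (fun n : ℕ => xs (n : ℤ)) Filter.atTop (nhds ax))
    (hd : Filter.Tendsto (fun n : ℕ => xs (-(n : ℤ))) Filter.atTop (nhds dx))
    (hfix : ∀ t ∈ Set.Icc (0:ℝ) ax ∪ Set.Icc dx 1, U x t = t) :
    (∀ s ∈ Set.Ioo ax dx, ∀ t ∈ Set.Icc (0:ℝ) ax ∪ Set.Icc dx 1, U s t = t) ∧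
    (∀ s ∈ Set.Icc (0:ℝ) ax ∪ Set.Icc dx 1, ∀ t ∈ Set.Icc (0:ℝ) ax ∪ Set.Icc dx 1,
      U s t ∈ Set.Icc (0:ℝ) ax ∪ Set.Icc dx 1) ∧
    (∀ s ∈ Set.Ioo ax dx, ∀ t ∈ Set.Ioo ax dx, U s t ∈ Set.Ioo ax dx) :=
  stmt15_general hU ⟨hx.1.le, hx.2.le⟩ hxe.ne hy hxy hxs0 hxsp hxsn ha hd hfix
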